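/- arXiv:1304.3373 — 2 statements merged into one kernel-verified Lean document; each statement's English description precedes it below -/
import Mathlib

section
/- Let G be an abelian p-group and H = ⊕ᵢ₌₁ⁿ Hᵢ a finite subgroup with each Hᵢ cyclic. Then every homomorphism H → G extends to an endomorphism of G if and only if (a) every homomorphism Hᵢ → G extends to an endomorphism of G for each i, and (b) the direct sum ⊕ Hᵢ is a valuated direct sum with respect to the height function of G (i.e., h(x₁ + ⋯ + xₙ) = min h(xᵢ) for xᵢ ∈ Hᵢ). -/
open AddSubgroup

/-- The `p`-height of an element, as an extended natural number. -/
noncomputable def pHeight (p : ℕ) {G : Type*} [AddCommGroup G] (x : G) : ℕ∞ :=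
  sSup {n : ℕ∞ | ∃ m : ℕ, n = (m : ℕ∞) ∧ ∃ y : G, p ^ m • y = x}

/-- `G` is an abelian `p`-group. -/
def IsPGrp (p : ℕ) (G : Type*) [AddCommGroup G] : Prop :=
  ∀ x : G, ∃ n : ℕ, p ^ n • x = 0

/-- `H ∈ Q(G)`: every homomorphism `H → G` extends to an endomorphism of `G`. -/
def InQ {G : Type*} [AddCommGroup G] (H : AddSubgroup G) : Prop :=
  ∀ f : H →+ G, ∃ g : G →+ G, ∀ x : H, g x = f x

/-- `H ∈ P(G)`: every monomorphism `H → G` extends to an endomorphism of `G`. -/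
def InP {G : Type*} [AddCommGroup G] (H : AddSubgroup G) : Prop :=
  ∀ f : H →+ G, Function.Injective f → ∃ g : G →+ G, ∀ x : H, g x = f x

/-- `H ∈ W(G)`: every endomorphism of `H` extends to an endomorphism of `G`. -/
def InW {G : Type*} [AddCommGroup G] (H : AddSubgroup G) : Prop :=
  ∀ f : H →+ H, ∃ g : G →+ G, ∀ x : H, g x = (f x : G)

/-- `K` is an internal direct sum of cyclic subgroups. -/
def IsDirectSumOfCyclics {G : Type*} [AddCommGroup G] (K : AddSubgroup G) : Prop :=
  ∃ (ι : Type) (a : ι → G), (∀ i, a i ∈ K) ∧ (⨆ i, zmultiples (a i)) = K ∧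
    iSupIndep (fun i => zmultiples (a i))

/-- `K` is a `p`-pure subgroup: `pⁿG ∩ K = pⁿK`. -/
def IsPure (p : ℕ) {G : Type*} [AddCommGroup G] (K : AddSubgroup G) : Prop :=
  ∀ n : ℕ, ∀ x ∈ K, (∃ y : G, p ^ n • y = x) → ∃ z ∈ K, p ^ n • z = x

/-- The quotient `G/K` is divisible (equivalently `G = K + pG`). -/
def QuotDivisible (p : ℕ) {G : Type*} [AddCommGroup G] (K : AddSubgroup G) : Prop :=
  ∀ x : G, ∃ y : G, x - p • y ∈ K

/-- The Ulm sequence of `x` has a gap before index `k` (with `h₋₁ = -1`). -/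
def HasGapBefore (p : ℕ) {G : Type*} [AddCommGroup G] (x : G) (k : ℕ) : Prop :=
  if k = 0 then 0 < pHeight p x
  else pHeight p (p ^ (k - 1) • x) + 1 < pHeight p (p ^ k • x)


/-!
Every homomorphism `H = ⊕ Hᵢ → G` extends exactly when this holds for each `Hᵢ` and each
coordinate projection `H → Hᵢ` extends to an endomorphism of `G`. Endomorphisms do not lower
heights, so extending projections force the sum to be valuated. For the converse let `Hᵢ = ⟨z⟩` and
let `B` be the sum of the other summands; we need an endomorphism killing `B` and fixing `z`.

If the heights of `z, pz, p²z, …` are finite up to `pʲ⁻¹z`, then every `y` with `pʲy = 0` and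
`h(pⁱy) ≥ h(pⁱz)` for `i < j` is an image of `z` under an endomorphism killing `B`. By induction on
`j` it suffices to match `pʲ⁻¹y`, with `r = h(pʲ⁻¹z)`: valuatedness bounds the order of `z` modulo
`B + pʳ⁺¹G` from below, and as `ℚ/ℤ` is injective, a character of `G/(B + pʳ⁺¹G)` of order dividing
`pʳ⁺¹` and large enough on `z`, followed by `1 ↦ w` where `pʳw = pʲ⁻¹y`, does this.

If `pʲz ≠ 0` has infinite height and `z` has order `pᵉ⁺¹`, then `pᵉz` has infinite height, and
extending the homomorphisms `⟨z⟩ → G` shows that `pᵉy` does too whenever `pᵉ⁺¹y = 0`. Hence `pᵉT` is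
divisible, where `T` is the `p`-primary component of `G`. As `pᵉT` is injective, there is a
homomorphism `φ : G → pᵉT` that kills `B` and satisfies `pʲφ(z) = pʲz`; since `h(φ(z)) = ∞`, the
previous case applies to `y = z - φ(z)`.
-/

section Extension

variable {M N Q : Type*} [AddCommGroup M] [AddCommGroup N] [AddCommGroup Q]

lemma exists_hom_zmultiples_apply_eq {z : M} {y : N} (h : ∀ c : ℤ, c • z = 0 → c • y = 0) :
    ∃ f : zmultiples z →+ N, f ⟨z, mem_zmultiples z⟩ = y := by
  let P : M →ₗ.[ℤ] N := LinearPMap.mkSpanSingleton' z y h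
  have hz : z ∈ P.domain.toAddSubgroup := Submodule.mem_span_singleton_self z
  refine ⟨P.toFun.toAddMonoidHom.comp (inclusion (zmultiples_le.2 hz)), ?_⟩
  have hPz : P ⟨z, hz⟩ = y := LinearPMap.mkSpanSingleton'_apply_self z y h hz
  exact hPz

lemma zsmul_eq_zero_of_addOrderOf_eq {n : ℕ} {z : M} {y : N} (hz : addOrderOf z = n)
    (hy : n • y = 0) {c : ℤ} (hc : c • z = 0) : c • y = 0 := by
  obtain ⟨k, rfl⟩ := hz ▸ addOrderOf_dvd_iff_zsmul_eq_zero.2 hc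
  rw [mul_comm, mul_smul, natCast_zsmul, hy, smul_zero]

lemma exists_hom_sup_of_disjoint {A B : AddSubgroup M} (hAB : Disjoint A B) (f : A →+ N) :
    ∃ g : (A ⊔ B : AddSubgroup M) →+ N,
      (∀ a : A, g (inclusion le_sup_left a) = f a) ∧
        ∀ b : B, g (inclusion le_sup_right b) = 0 := by
  let PA : M →ₗ.[ℤ] N := ⟨toIntSubmodule A, f.toIntLinearMap⟩
  let PB : M →ₗ.[ℤ] N := ⟨toIntSubmodule B, 0⟩
  have hdisj : Disjoint PA.domain PB.domain :=
    Submodule.disjoint_def.2 fun x ↦ AddSubgroup.disjoint_def.1 hAB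
  let P := PA.sup PB (PA.sup_h_of_disjoint PB hdisj)
  have hP : A ⊔ B ≤ P.domain.toAddSubgroup :=
    sup_le (le_sup_left : PA.domain ≤ P.domain) (le_sup_right : PB.domain ≤ P.domain)
  exact ⟨P.toFun.toAddMonoidHom.comp (inclusion hP),
    fun a ↦ ((PA.left_le_sup PB _).2 (x := a) rfl).symm,
    fun b ↦ ((PA.right_le_sup PB _).2 (x := b) rfl).symm⟩

lemma exists_hom_apply_eq_of_baer (hQ : Module.Baer ℤ Q) {B : AddSubgroup M} {z : M} {y : Q}
    (h : ∀ c : ℤ, c • z ∈ B → c • y = 0) : ∃ f : M →+ Q, B ≤ f.ker ∧ f z = y := by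
  let π := QuotientAddGroup.mk' B
  obtain ⟨f₀, hf₀⟩ := exists_hom_zmultiples_apply_eq (z := π z) (y := y) fun c hc ↦
    h c ((QuotientAddGroup.eq_zero_iff _).1 (by rwa [← map_zsmul] at hc))
  obtain ⟨f, hf⟩ := hQ.extension_property_addMonoidHom (zmultiples (π z)).subtype
    (subtype_injective _) f₀
  refine ⟨f.comp π, fun b hb ↦ ?_, ?_⟩
  · have hπb : π b = 0 := (QuotientAddGroup.eq_zero_iff b).2 hb
    rw [AddMonoidHom.mem_ker, AddMonoidHom.comp_apply, hπb, map_zero]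
  · rw [← hf₀, ← hf]
    rfl

lemma ker_inf_ker_le_ker_add (f g : M →+ N) : f.ker ⊓ g.ker ≤ (f + g).ker := by
  rintro x ⟨hf, hg⟩
  rw [AddMonoidHom.mem_ker, AddMonoidHom.add_apply, hf, hg, add_zero]

lemma exists_toAddCircle_eq_of_nsmul_eq_zero {n : ℕ} [NeZero n] {u : UnitAddCircle}
    (hu : n • u = 0) : ∃ k : ZMod n, ZMod.toAddCircle k = u := by
  obtain ⟨m, -, rfl⟩ := (AddCircle.nsmul_eq_zero_iff (NeZero.pos n)).1 hu
  exact ⟨m, by rw [ZMod.toAddCircle_natCast, mul_one]⟩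

lemma exists_hom_zmod_apply_eq {n : ℕ} [NeZero n] {B : AddSubgroup M} (hB : ∀ x : M, n • x ∈ B)
    {z : M} {k : ZMod n} (h : ∀ c : ℤ, c • z ∈ B → c • k = 0) :
    ∃ f : M →+ ZMod n, B ≤ f.ker ∧ f z = k := by
  have hinj : Function.Injective (ZMod.toAddCircle (N := n)) := ZMod.toAddCircle_injective n
  obtain ⟨χ, hχB, hχz⟩ := exists_hom_apply_eq_of_baer (y := ZMod.toAddCircle k)
    (Module.Baer.of_divisible UnitAddCircle) fun c hc ↦ by
      rw [← map_zsmul, h c hc, map_zero]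
  have hχ : ∀ x, χ x ∈ (ZMod.toAddCircle (N := n)).range := fun x ↦
    exists_toAddCircle_eq_of_nsmul_eq_zero (by rw [← map_nsmul]; exact hχB (hB x))
  let f := (AddMonoidHom.ofInjective hinj).symm.toAddMonoidHom.comp (χ.codRestrict _ hχ)
  have hf : ∀ x, ZMod.toAddCircle (f x) = χ x := fun x ↦
    congrArg Subtype.val ((AddMonoidHom.ofInjective hinj).apply_symm_apply ⟨χ x, hχ x⟩)
  refine ⟨f, fun b hb ↦ hinj ?_, hinj ?_⟩
  · rw [hf, map_zero]
    exact hχB hb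
  · rw [hf, hχz]

lemma exists_hom_apply_eq_zsmul {n : ℕ} [NeZero n] {B : AddSubgroup M} {z : M} {w : N} {k : ℤ}
    (hw : n • w = 0)
    (h : ∀ c : ℤ, c • z ∈ B ⊔ (nsmulAddMonoidHom n).range → (n : ℤ) ∣ c * k) :
    ∃ f : M →+ N, B ≤ f.ker ∧ f z = k • w := by
  obtain ⟨χ, hχB, hχz⟩ := exists_hom_zmod_apply_eq (k := (k : ZMod n))
    (fun x ↦ (le_sup_right : _ ≤ B ⊔ (nsmulAddMonoidHom n).range) ⟨x, rfl⟩) fun c hc ↦ by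
      rw [zsmul_eq_mul, ← Int.cast_mul, ZMod.intCast_zmod_eq_zero_iff_dvd]
      exact h c hc
  let L : ZMod n →+ N := ZMod.lift n ⟨zmultiplesHom N w, by simpa using hw⟩
  refine ⟨L.comp χ, fun b hb ↦ ?_, ?_⟩
  · rw [AddMonoidHom.mem_ker, AddMonoidHom.comp_apply, hχB (le_sup_left (a := B) hb), map_zero]
  · simp [L, hχz]

lemma baer_int_of_surjective_prime_nsmul {p : ℕ} (hp : p.Prime) (htors : IsPGrp p Q)
    (hdiv : Function.Surjective fun x : Q ↦ p • x) : Module.Baer ℤ Q := by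
  have hcop : ∀ q : ℕ, p.Coprime q → Function.Surjective fun x : Q ↦ q • x := fun q hq x ↦ by
    obtain ⟨n, hn⟩ := htors x
    obtain ⟨s, t, hst⟩ : IsCoprime (q : ℤ) ((p ^ n : ℕ) : ℤ) :=
      Nat.isCoprime_iff_coprime.2 (hq.pow_left n).symm
    refine ⟨s • x, ?_⟩
    calc q • s • x = (s * q + t * (p ^ n : ℕ)) • x := by
          rw [add_smul, mul_smul t, natCast_zsmul, hn, smul_zero, add_zero, mul_comm, mul_smul,
            natCast_zsmul]
      _ = x := by rw [hst, one_smul]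
  have hpow : ∀ l : ℕ, Function.Surjective fun x : Q ↦ p ^ l • x := fun l ↦ by
    simpa only [smul_iterate] using hdiv.iterate l
  let _ : DivisibleBy Q ℕ := divisibleByOfSMulRightSurj Q ℕ fun {c} hc x ↦ by
    obtain ⟨l, q, hpq, rfl⟩ := Nat.exists_eq_pow_mul_and_not_dvd hc p hp.ne_one
    obtain ⟨y, rfl⟩ := hpow l x
    obtain ⟨w, rfl⟩ := hcop q (hp.coprime_iff_not_dvd.2 hpq) y
    exact ⟨w, mul_smul _ _ _⟩
  let _ : DivisibleBy Q ℤ := AddGroup.divisibleByIntOfDivisibleByNat Q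
  exact Module.Baer.of_divisible Q

end Extension

section Height

variable {G : Type*} [AddCommGroup G] {p : ℕ}

lemma natCast_le_pHeight {m : ℕ} {x : G} :
    (m : ℕ∞) ≤ pHeight p x ↔ x ∈ (nsmulAddMonoidHom (p ^ m) : G →+ G).range := by
  refine ⟨fun h ↦ ?_, fun ⟨y, hy⟩ ↦ le_sSup ⟨m, rfl, y, hy⟩⟩
  cases m with
  | zero => exact ⟨x, by simp⟩
  | succ m =>
    obtain ⟨_, ⟨k, rfl, y, rfl⟩, hk⟩ := lt_sSup_iff.1
      ((Nat.cast_lt.2 m.lt_succ_self).trans_le h)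
    obtain ⟨l, rfl⟩ := Nat.exists_eq_add_of_le (Nat.succ_le_of_lt (Nat.cast_lt.1 hk))
    exact ⟨p ^ l • y, by simp [pow_add, mul_smul]⟩

lemma pHeight_eq_top_iff {x : G} : pHeight p x = ⊤ ↔ ∀ m : ℕ, ∃ y, p ^ m • y = x := by
  rw [ENat.eq_top_iff_forall_ge]
  exact forall_congr' fun m ↦ natCast_le_pHeight

lemma pHeight_le_pHeight_of_hom {G' : Type*} [AddCommGroup G'] (g : G →+ G') (x : G) :
    pHeight p x ≤ pHeight p (g x) := by
  refine ENat.forall_natCast_le_iff_le.1 fun m hm ↦ ?_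
  obtain ⟨y, rfl⟩ := natCast_le_pHeight.1 hm
  exact natCast_le_pHeight.2 ⟨g y, (map_nsmul g _ y).symm⟩

lemma pHeight_hom_eq_top {G' : Type*} [AddCommGroup G'] {x : G} (hx : pHeight p x = ⊤)
    (g : G →+ G') : pHeight p (g x) = ⊤ :=
  top_le_iff.1 (hx.ge.trans (pHeight_le_pHeight_of_hom g x))

lemma iInf_pHeight_le_pHeight_sum {ι : Type*} [Fintype ι] (c : ι → G) :
    ⨅ i, pHeight p (c i) ≤ pHeight p (∑ i, c i) :=
  ENat.forall_natCast_le_iff_le.1 fun _ hm ↦ natCast_le_pHeight.2 <|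
    sum_mem fun i _ ↦ natCast_le_pHeight.1 (hm.trans (iInf_le _ i))

lemma min_pHeight_le_pHeight_sub (x y : G) :
    min (pHeight p x) (pHeight p y) ≤ pHeight p (x - y) :=
  ENat.forall_natCast_le_iff_le.1 fun _ hm ↦ natCast_le_pHeight.2 <|
    sub_mem (natCast_le_pHeight.1 (hm.trans (min_le_left _ _)))
      (natCast_le_pHeight.1 (hm.trans (min_le_right _ _)))

lemma pHeight_add_le_pHeight_pow_smul (k : ℕ) (x : G) :
    pHeight p x + k ≤ pHeight p (p ^ k • x) := by
  cases h : pHeight p x with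
  | top => exact le_top.trans_eq (pHeight_hom_eq_top h (nsmulAddMonoidHom (p ^ k))).symm
  | coe m =>
    obtain ⟨y, rfl⟩ := natCast_le_pHeight.1 h.ge
    rw [← Nat.cast_add]
    exact natCast_le_pHeight.2 ⟨y, by simp [pow_add, mul_smul, smul_comm (p ^ m)]⟩

lemma pHeight_pow_smul_le_add {i j s : ℕ} {x : G} (hij : i ≤ j)
    (h : pHeight p (p ^ j • x) ≤ (s + j : ℕ)) : pHeight p (p ^ i • x) ≤ (s + i : ℕ) := by
  obtain ⟨k, rfl⟩ := Nat.exists_eq_add_of_le' hij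
  rw [pow_add, mul_smul, add_left_comm, add_comm, Nat.cast_add] at h
  exact (ENat.add_le_add_iff_right (ENat.natCast_ne_top k)).1
    ((pHeight_add_le_pHeight_pow_smul k _).trans h)

lemma pHeight_eq_top_of_surjective (h : Function.Surjective fun x : G ↦ p • x) (x : G) :
    pHeight p x = ⊤ :=
  pHeight_eq_top_iff.2 fun m ↦ by simpa only [smul_iterate] using h.iterate m x

lemma pow_succ_dvd_of_le_pHeight_zsmul (hp : p.Prime) {z : G} {m j : ℕ} {c : ℤ}
    (hc : m ≤ pHeight p (c • z)) (hj : ¬ m ≤ pHeight p (p ^ j • z)) : (p : ℤ) ^ (j + 1) ∣ c := by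
  obtain ⟨l, -, hl⟩ := (Nat.dvd_prime_pow hp).1 (Int.gcd_dvd_natAbs_right c ((p ^ m : ℕ) : ℤ))
  have hlc : (p : ℤ) ^ l ∣ c := by exact_mod_cast hl ▸ Int.gcd_dvd_left c _
  by_contra hdvd
  have hlj : l ≤ j := by
    by_contra! hjl
    exact hdvd ((pow_dvd_pow _ hjl).trans hlc)
  obtain ⟨s, t, hst⟩ : ∃ s t : ℤ, ((p ^ l : ℕ) : ℤ) = s * c + t * (p ^ m : ℕ) :=
    ⟨_, _, by rw [← hl, Int.gcd_eq_gcd_ab, mul_comm c, mul_comm _ (Int.gcdB _ _)]⟩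
  have hbezout : p ^ l • z = s • c • z + p ^ m • t • z := by
    rw [← natCast_zsmul, hst, add_smul, mul_smul, mul_comm t, mul_smul, natCast_zsmul]
  apply hj
  rw [natCast_le_pHeight, ← Nat.sub_add_cancel hlj, pow_add, mul_smul, hbezout]
  exact nsmul_mem (add_mem (zsmul_mem (natCast_le_pHeight.1 hc) s) ⟨t • z, rfl⟩) _

lemma exists_sum_eq_of_mem_iSup_ne {ι : Type*} [Fintype ι] {K : ι → AddSubgroup G} {i : ι} {b : G}
    (hb : b ∈ ⨆ (j) (_ : j ≠ i), K j) : ∃ c : ι → G, (∀ j, c j ∈ K j) ∧ c i = 0 ∧ ∑ j, c j = b := by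
  classical
  rw [iSup_subtype'] at hb
  induction hb using AddSubgroup.iSup_induction' with
  | hp j x hx =>
    refine ⟨Pi.single j x, fun k ↦ ?_, Pi.single_eq_of_ne j.2.symm _, by simp⟩
    obtain rfl | hk := eq_or_ne k j <;> simp [*]
  | h1 => exact ⟨0, by simp⟩
  | hadd x y _ _ ihx ihy =>
    obtain ⟨c, hcK, hci, rfl⟩ := ihx
    obtain ⟨d, hdK, hdi, rfl⟩ := ihy
    exact ⟨c + d, fun j ↦ add_mem (hcK j) (hdK j), by simp [hci, hdi], by
      simp [Finset.sum_add_distrib]⟩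

lemma pHeight_sum_eq_iInf_iff {ι : Type*} [Fintype ι] {K : ι → AddSubgroup G} :
    (∀ c : ι → G, (∀ i, c i ∈ K i) → pHeight p (∑ i, c i) = ⨅ i, pHeight p (c i)) ↔
      ∀ i, ∀ a ∈ K i, ∀ b ∈ ⨆ (j) (_ : j ≠ i), K j, pHeight p (a + b) ≤ pHeight p a := by
  classical
  constructor
  · intro hK i a ha b hb
    obtain ⟨c, hcK, hci, rfl⟩ := exists_sum_eq_of_mem_iSup_ne hb
    have hsum : ∑ j, (c + Pi.single i a : ι → G) j = a + ∑ j, c j := by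
      simp [Finset.sum_add_distrib, add_comm]
    have hmem : ∀ j, (c + Pi.single i a : ι → G) j ∈ K j := fun j ↦
      add_mem (hcK j) (by obtain rfl | hij := eq_or_ne j i <;> simp [*])
    rw [← hsum, hK _ hmem]
    exact (iInf_le _ i).trans_eq (by simp [hci])
  · refine fun hK c hc ↦ le_antisymm (le_iInf fun i ↦ ?_) (iInf_pHeight_le_pHeight_sum c)
    rw [← Finset.add_sum_erase _ _ (Finset.mem_univ i)]
    exact hK i _ (hc i) _ <| sum_mem fun j hj ↦
      mem_iSup_of_mem j <| mem_iSup_of_mem (Finset.ne_of_mem_erase hj) (hc j)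

end Height

section Projection

variable {G : Type*} [AddCommGroup G] {p : ℕ}

/-- The projection of `A ⊕ B` onto `A` extends to an endomorphism of `G`. The sum is not required
to be direct; the existence of the extension forces it. -/
def ExtendsProjection (A B : AddSubgroup G) : Prop :=
  ∃ θ : G →+ G, (∀ a ∈ A, θ a = a) ∧ B ≤ θ.ker

lemma ExtendsProjection.pHeight_add_le {A B : AddSubgroup G} (h : ExtendsProjection A B) {a b : G}
    (ha : a ∈ A) (hb : b ∈ B) : pHeight p (a + b) ≤ pHeight p a := by
  obtain ⟨θ, hA, hB⟩ := h
  calc pHeight p (a + b) ≤ pHeight p (θ (a + b)) := pHeight_le_pHeight_of_hom θ _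
    _ = pHeight p a := by rw [map_add, hA a ha, hB hb, add_zero]

lemma InQ.exists_extension_le_ker {A B : AddSubgroup G} (h : InQ (A ⊔ B)) (hAB : Disjoint A B)
    (f : A →+ G) : ∃ g : G →+ G, (∀ a : A, g a = f a) ∧ B ≤ g.ker := by
  obtain ⟨f', hA, hB⟩ := exists_hom_sup_of_disjoint hAB f
  obtain ⟨g, hg⟩ := h f'
  exact ⟨g, fun a ↦ (hg _).trans (hA a), fun b hb ↦ (hg _).trans (hB ⟨b, hb⟩)⟩

lemma inQ_iSup_iff {ι : Type*} [Finite ι] {K : ι → AddSubgroup G} (hK : iSupIndep K) :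
    InQ (⨆ i, K i) ↔ ∀ i, InQ (K i) ∧ ExtendsProjection (K i) (⨆ (j) (_ : j ≠ i), K j) := by
  constructor
  · intro hQ i
    rw [iSup_split_single K i] at hQ
    refine ⟨fun f ↦ ?_, ?_⟩
    · obtain ⟨g, hg, -⟩ := hQ.exists_extension_le_ker (hK i) f
      exact ⟨g, hg⟩
    · obtain ⟨θ, hθ, hker⟩ := hQ.exists_extension_le_ker (hK i) (K i).subtype
      exact ⟨θ, fun a ha ↦ hθ ⟨a, ha⟩, hker⟩
  · intro h f
    have := Fintype.ofFinite ι
    choose θ hθK hθker using fun i ↦ (h i).2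
    choose g hg using fun i ↦ (h i).1 (f.comp (inclusion (le_iSup K i)))
    refine ⟨∑ i, (g i).comp (θ i), fun ⟨x, hx⟩ ↦ ?_⟩
    induction hx using AddSubgroup.iSup_induction' with
    | hp i x hx =>
      have hne : ∀ j ≠ i, θ j x = 0 := fun j hj ↦
        hθker j (mem_iSup_of_mem i (mem_iSup_of_mem hj.symm hx))
      rw [AddMonoidHom.finsetSum_apply,
        Finset.sum_eq_single i (by simp +contextual [hne]) (by simp)]
      rw [AddMonoidHom.comp_apply, hθK i x hx]
      exact hg i ⟨x, hx⟩
    | h1 => exact (map_zero _).trans (map_zero f).symm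
    | hadd x y hx hy ihx ihy =>
      rw [map_add, ihx, ihy, ← map_add]
      rfl

end Projection

section Cyclic

variable {G : Type*} [AddCommGroup G] {p e : ℕ} {z : G} {B : AddSubgroup G}

lemma InQ.exists_endomorphism_apply_eq (hQ : InQ (zmultiples z)) {y : G}
    (h : ∀ c : ℤ, c • z = 0 → c • y = 0) : ∃ g : G →+ G, g z = y := by
  obtain ⟨f, hf⟩ := exists_hom_zmultiples_apply_eq h
  obtain ⟨g, hg⟩ := hQ f
  exact ⟨g, (hg _).trans hf⟩

lemma pow_succ_dvd_of_zsmul_mem_sup (hp : p.Prime)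
    (hval : ∀ a ∈ zmultiples z, ∀ b ∈ B, pHeight p (a + b) ≤ pHeight p a) {m j : ℕ}
    (hj : ¬ m ≤ pHeight p (p ^ j • z)) {c : ℤ}
    (hc : c • z ∈ B ⊔ (nsmulAddMonoidHom (p ^ m)).range) : (p : ℤ) ^ (j + 1) ∣ c := by
  obtain ⟨b, hb, y, hy, hby⟩ := mem_sup.1 hc
  refine pow_succ_dvd_of_le_pHeight_zsmul hp ?_ hj
  calc (m : ℕ∞) ≤ pHeight p y := natCast_le_pHeight.2 hy
    _ = pHeight p (c • z + -b) := by rw [← hby, add_neg_cancel_comm]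
    _ ≤ pHeight p (c • z) := hval _ (zsmul_mem_zmultiples z c) _ (neg_mem hb)

lemma exists_endomorphism_apply_eq_pow_smul (hp : p.Prime)
    (hval : ∀ a ∈ zmultiples z, ∀ b ∈ B, pHeight p (a + b) ≤ pHeight p a) {s j : ℕ} {w : G}
    (hj : pHeight p (p ^ j • z) ≤ (s + j : ℕ)) (hw : p ^ (s + j + 1) • w = 0) :
    ∃ θ : G →+ G, B ≤ θ.ker ∧ θ z = p ^ s • w := by
  have : NeZero (p ^ (s + j + 1)) := ⟨pow_ne_zero _ hp.ne_zero⟩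
  have hj' : ¬ ((s + j + 1 : ℕ) : ℕ∞) ≤ pHeight p (p ^ j • z) := fun h ↦
    Nat.not_succ_le_self _ (Nat.cast_le.1 (h.trans hj))
  obtain ⟨θ, hθB, hθz⟩ := exists_hom_apply_eq_zsmul (B := B) (z := z) (k := (p ^ s : ℕ)) hw
    fun c hc ↦ by
      rw [add_assoc, pow_add, mul_comm, Nat.cast_mul, Nat.cast_pow p (j + 1)]
      exact mul_dvd_mul_right (pow_succ_dvd_of_zsmul_mem_sup hp hval hj' hc) _
  exact ⟨θ, hθB, by rw [hθz, natCast_zsmul]⟩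

lemma exists_endomorphism_apply_eq_of_pHeight_le (hp : p.Prime)
    (hval : ∀ a ∈ zmultiples z, ∀ b ∈ B, pHeight p (a + b) ≤ pHeight p a) {j : ℕ} {y : G}
    (hfin : ∀ i < j, pHeight p (p ^ i • z) ≠ ⊤) (hy : p ^ j • y = 0)
    (hle : ∀ i < j, pHeight p (p ^ i • z) ≤ pHeight p (p ^ i • y)) :
    ∃ θ : G →+ G, B ≤ θ.ker ∧ θ z = y := by
  induction j generalizing y with
  | zero => exact ⟨0, by simp, by simpa using hy.symm⟩
  | succ j ih =>
    obtain ⟨r, hr⟩ := ENat.ne_top_iff_exists.1 (hfin j j.lt_succ_self)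
    obtain ⟨s, rfl⟩ : ∃ s, r = s + j := Nat.exists_eq_add_of_le' <| by
      rw [← Nat.cast_le (α := ℕ∞), hr]
      exact natCast_le_pHeight.2 ⟨z, rfl⟩
    obtain ⟨w, hw⟩ : ∃ w, p ^ (s + j) • w = p ^ j • y :=
      natCast_le_pHeight.1 (hr.trans_le (hle j j.lt_succ_self))
    have hw₀ : p ^ (s + j + 1) • w = 0 := by
      rw [pow_succ', mul_smul, hw, ← mul_smul, ← pow_succ', hy]
    obtain ⟨θ, hθB, hθz⟩ := exists_endomorphism_apply_eq_pow_smul hp hval hr.ge hw₀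
    have hle' : ∀ i < j, pHeight p (p ^ i • z) ≤ pHeight p (p ^ i • p ^ s • w) := fun i hi ↦
      (pHeight_pow_smul_le_add hi.le hr.ge).trans (natCast_le_pHeight.2 ⟨w, by
        rw [nsmulAddMonoidHom_apply, add_comm, pow_add, mul_smul]⟩)
    obtain ⟨θ', hθ'B, hθ'z⟩ := ih (y := y - p ^ s • w)
      (fun i hi ↦ hfin i (hi.trans j.lt_succ_self))
      (by rw [smul_sub, ← mul_smul, ← pow_add, add_comm j, hw, sub_self]) fun i hi ↦ by
        rw [smul_sub]
        exact (le_min (hle i (hi.trans j.lt_succ_self)) (hle' i hi)).trans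
          (min_pHeight_le_pHeight_sub _ _)
    exact ⟨θ + θ', (le_inf hθB hθ'B).trans (ker_inf_ker_le_ker_add θ θ'), by simp [hθz, hθ'z]⟩

lemma InQ.pHeight_pow_smul_eq_top (hQ : InQ (zmultiples z)) (hord : addOrderOf z = p ^ (e + 1))
    (htop : pHeight p (p ^ e • z) = ⊤) {y : G} (hy : p ^ (e + 1) • y = 0) :
    pHeight p (p ^ e • y) = ⊤ := by
  obtain ⟨g, rfl⟩ := hQ.exists_endomorphism_apply_eq (y := y) fun c ↦
    zsmul_eq_zero_of_addOrderOf_eq hord hy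
  rw [← map_nsmul]
  exact pHeight_hom_eq_top htop g

lemma exists_prime_smul_eq_of_pHeight_eq_top
    (h : ∀ y : G, p ^ (e + 1) • y = 0 → pHeight p (p ^ e • y) = ⊤) {n : ℕ} {u : G}
    (hu : p ^ n • p ^ e • u = 0) : ∃ v : G, p • p ^ e • v = p ^ e • u := by
  induction n generalizing u with
  | zero => exact ⟨0, by simpa using hu.symm⟩
  | succ n ih =>
    have hpu : p ^ (e + 1) • p ^ n • u = 0 := by
      rw [← hu]
      module
    obtain ⟨t, ht⟩ := pHeight_eq_top_iff.1 (h (p ^ n • u) hpu) (n + 1 + e)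
    obtain ⟨v, hv⟩ := ih (u := u - p • t) <| by
      rw [smul_sub, smul_sub, sub_eq_zero, ← smul_comm (p ^ e), ← ht]
      module
    exact ⟨v + t, by rw [smul_add, smul_add, hv, smul_sub, smul_comm p (p ^ e) t, sub_add_cancel]⟩

/-- The subgroup `p ^ e T` of `G`, where `T` is the `p`-primary component of `G`. It is divisible
as soon as some `⟨z⟩ ∈ Q(G)` of order `p ^ (e + 1)` has a socle of infinite height. -/
def powSmulPrimaryComponent (G : Type*) [AddCommGroup G] (p e : ℕ) : AddSubgroup G :=
  (AddCommGroup.primaryComponent G p).map (nsmulAddMonoidHom (p ^ e))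

lemma surjective_prime_smul_powSmulPrimaryComponent
    (h : ∀ y : G, p ^ (e + 1) • y = 0 → pHeight p (p ^ e • y) = ⊤) :
    Function.Surjective fun d : powSmulPrimaryComponent G p e ↦ p • d := by
  rintro ⟨_, u, ⟨n, hu⟩, rfl⟩
  obtain ⟨v, hv⟩ := exists_prime_smul_eq_of_pHeight_eq_top h (n := n) (u := u) <| by
    rw [smul_comm, hu, smul_zero]
  refine ⟨⟨p ^ e • v, v, ⟨n + 1 + e, ?_⟩, rfl⟩, Subtype.ext hv⟩
  rw [pow_add, pow_succ, mul_smul, mul_smul, hv, smul_comm, hu, smul_zero]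

lemma pHeight_pow_smul_eq_top_of_surjective
    (h : Function.Surjective fun d : powSmulPrimaryComponent G p e ↦ p • d)
    {n : ℕ} {u : G} (hu : p ^ n • u = 0) : pHeight p (p ^ e • u) = ⊤ :=
  pHeight_hom_eq_top (pHeight_eq_top_of_surjective h ⟨p ^ e • u, u, ⟨n, hu⟩, rfl⟩)
    (AddSubgroup.subtype _)

lemma isPGrp_powSmulPrimaryComponent :
    IsPGrp p (powSmulPrimaryComponent G p e) := by
  rintro ⟨_, u, ⟨n, hu⟩, rfl⟩
  exact ⟨n, Subtype.ext <| show p ^ n • p ^ e • u = 0 by rw [smul_comm, hu, smul_zero]⟩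

lemma exists_endomorphism_apply_eq_pow_smul_of_baer
    (h : Module.Baer ℤ (powSmulPrimaryComponent G p e))
    {n : ℕ} {u : G} (hu : p ^ n • u = 0) (hz : ∀ c : ℤ, c • z ∈ B → c • p ^ e • u = 0) :
    ∃ φ : G →+ G, B ≤ φ.ker ∧ φ z = p ^ e • u := by
  obtain ⟨φ, hφB, hφz⟩ := exists_hom_apply_eq_of_baer h (y := ⟨p ^ e • u, u, ⟨n, hu⟩, rfl⟩)
    fun c hc ↦ Subtype.ext (hz c hc)
  refine ⟨(AddSubgroup.subtype _).comp φ, fun b hb ↦ ?_, congrArg Subtype.val hφz⟩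
  rw [AddMonoidHom.mem_ker, AddMonoidHom.comp_apply, hφB hb, map_zero]

lemma exists_endomorphism_pow_smul_apply_eq_of_pHeight_eq_top (hp : p.Prime)
    (hord : addOrderOf z = p ^ e) (hQ : InQ (zmultiples z)) (hdisj : Disjoint (zmultiples z) B)
    {j : ℕ} (hj : pHeight p (p ^ j • z) = ⊤) :
    ∃ φ : G →+ G, B ≤ φ.ker ∧ p ^ j • φ z = p ^ j • z ∧ pHeight p (φ z) = ⊤ := by
  obtain hje | hje := le_or_gt e j
  · have hz : p ^ j • z = 0 := addOrderOf_dvd_iff_nsmul_eq_zero.1 (hord ▸ pow_dvd_pow p hje)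
    exact ⟨0, by simp, by simp [hz], by rwa [AddMonoidHom.zero_apply, ← hz]⟩
  obtain ⟨k, rfl⟩ := Nat.exists_eq_add_of_lt hje
  have htop : pHeight p (p ^ (j + k) • z) = ⊤ := by
    rw [add_comm, pow_add, mul_smul]
    exact pHeight_hom_eq_top hj (nsmulAddMonoidHom (p ^ k))
  have hdiv := surjective_prime_smul_powSmulPrimaryComponent fun _ ↦
    hQ.pHeight_pow_smul_eq_top hord htop
  obtain ⟨t, ht⟩ := pHeight_eq_top_iff.1 hj (j + (j + k))
  have ht₀ : p ^ (j + k + 1) • p ^ (j + k) • t = 0 := by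
    calc p ^ (j + k + 1) • p ^ (j + k) • t = p ^ (k + 1) • p ^ (j + (j + k)) • t := by
          module
      _ = addOrderOf z • z := by
          rw [ht, ← mul_smul, ← pow_add, hord, add_comm, add_assoc]
      _ = 0 := addOrderOf_nsmul_eq_zero z
  have ht_tors : p ^ (j + k + 1 + (j + k)) • t = 0 := by rw [pow_add, mul_smul, ht₀]
  obtain ⟨φ, hφB, hφz⟩ := exists_endomorphism_apply_eq_pow_smul_of_baer (z := z)
    (baer_int_of_surjective_prime_nsmul hp isPGrp_powSmulPrimaryComponent hdiv) ht_tors fun c hc ↦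
      zsmul_eq_zero_of_addOrderOf_eq hord ht₀
        (AddSubgroup.disjoint_def.1 hdisj (zsmul_mem_zmultiples z c) hc)
  refine ⟨φ, hφB, ?_, ?_⟩
  · rw [hφz, ← mul_smul, ← pow_add, ht]
  · rw [hφz]
    exact pHeight_pow_smul_eq_top_of_surjective hdiv ht_tors

lemma extendsProjection_zmultiples (hp : p.Prime) (hord : addOrderOf z = p ^ e)
    (hQ : InQ (zmultiples z)) (hdisj : Disjoint (zmultiples z) B)
    (hval : ∀ a ∈ zmultiples z, ∀ b ∈ B, pHeight p (a + b) ≤ pHeight p a) :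
    ExtendsProjection (zmultiples z) B := by
  classical
  have htop : ∃ j, pHeight p (p ^ j • z) = ⊤ :=
    ⟨e, by rw [← hord, addOrderOf_nsmul_eq_zero]; exact pHeight_eq_top_iff.2 fun m ↦ ⟨0, by simp⟩⟩
  obtain ⟨φ, hφB, hφz, hφtop⟩ :=
    exists_endomorphism_pow_smul_apply_eq_of_pHeight_eq_top hp hord hQ hdisj (Nat.find_spec htop)
  obtain ⟨θ, hθB, hθz⟩ := exists_endomorphism_apply_eq_of_pHeight_le hp hval (y := z - φ z)
    (fun _ hi ↦ Nat.find_min htop hi) (by rw [smul_sub, hφz, sub_self]) fun i _ ↦ by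
      have hφi : pHeight p (p ^ i • φ z) = ⊤ :=
        pHeight_hom_eq_top hφtop (nsmulAddMonoidHom (p ^ i))
      simpa only [smul_sub, hφi, le_top, inf_of_le_left] using
        min_pHeight_le_pHeight_sub (p := p) (p ^ i • z) (p ^ i • φ z)
  have hz : (θ + φ) z = z := by rw [AddMonoidHom.add_apply, hθz, sub_add_cancel]
  refine ⟨θ + φ, ?_, (le_inf hθB hφB).trans (ker_inf_ker_le_ker_add θ φ)⟩
  rintro _ ⟨c, rfl⟩
  simp only [map_zsmul, hz]

end Cyclic

theorem stmt12_general {G : Type*} [AddCommGroup G] {p : ℕ} (hp : p.Prime)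
    {ι : Type*} [Fintype ι] {z : ι → G} {e : ι → ℕ} (hord : ∀ i, addOrderOf (z i) = p ^ e i)
    (hind : iSupIndep (fun i => zmultiples (z i))) :
    InQ (⨆ i, zmultiples (z i)) ↔
      ((∀ i, InQ (zmultiples (z i))) ∧
        ∀ c : ι → G, (∀ i, c i ∈ zmultiples (z i)) →
          pHeight p (∑ i, c i) = ⨅ i, pHeight p (c i)) := by
  rw [inQ_iSup_iff hind, pHeight_sum_eq_iInf_iff, ← forall_and]
  exact forall_congr' fun i ↦ and_congr_right fun hQ ↦
    ⟨fun h a ha b hb ↦ h.pHeight_add_le ha hb, extendsProjection_zmultiples hp (hord i) hQ (hind i)⟩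

theorem stmt12 {G : Type*} [AddCommGroup G] (p : ℕ) (hp : p.Prime) (hG : IsPGrp p G)
    (n : ℕ) (z : Fin n → G) (e : Fin n → ℕ) (hord : ∀ i, addOrderOf (z i) = p ^ e i)
    (hind : iSupIndep (fun i => zmultiples (z i)))
    (H : AddSubgroup G) (hH : H = ⨆ i, zmultiples (z i)) :
    InQ H ↔
      ((∀ i, InQ (zmultiples (z i))) ∧
        ∀ c : Fin n → G, (∀ i, c i ∈ zmultiples (z i)) →
          pHeight p (∑ i, c i) = ⨅ i, pHeight p (c i)) := by
  subst hH
  exact stmt12_general hp hord hind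
end

section
/- Let G be an abelian group and H a finitely generated subgroup of G. If every monomorphism H → G extends to an endomorphism of G, then every homomorphism H → G extends to an endomorphism of G. -/
open AddSubgroup

/-!
The restrictions to `H` of endomorphisms of `G` form a subgroup `E` of `Hom(H, G)`, stable under
composition with endomorphisms of `G`, and by hypothesis `E` contains every monomorphism.

A homomorphism `f` killing the torsion of `H` lies in `E`: the inclusion minus `k f` is injective
for all but finitely many integers `k`, since a nonzero element of its kernel gives an eigenvector
with eigenvalue `k⁻¹` over `ℚ`; take the difference for two consecutive values of `k`.

The torsion of `H` is a direct sum of cyclic groups `C` of prime power order, so it remains to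
extend the homomorphisms `H → C → G`. A map `φ : H → G` with `p`-primary image lies in `E` as soon
as the inclusion minus `φ` is injective, which only has to be tested on elements `x` with `p x = 0`;
with this criterion everything reduces to the projections `H → C ⊆ G`. Let `s` generate the
`p`-torsion of `C`. If `s` has finite `p`-height in `G`, it spans the `p`-torsion of a cyclic direct
summand of `G`, and the projection onto that summand does the job. If two summands for the same `p`
have generators `s`, `s'` of infinite height, maps sending `s` to `s'` and `s'` to `s` lie in `E`,
and composing them handles `C`. So at most one projection per prime is missing; as the sum of all
projections lies in `E`, Bézout's identity over the distinct primes yields them all.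
-/

theorem injective_of_forall_nsmul_eq_zero {A B : Type*} [AddCommGroup A] [AddCommGroup B] (p : ℕ)
    (f : A →+ B) (htors : ∀ x, f x = 0 → ∃ n : ℕ, p ^ n • x = 0)
    (hf : ∀ x, p • x = 0 → f x = 0 → x = 0) : Function.Injective f := by
  rw [injective_iff_map_eq_zero]
  intro x hx
  obtain ⟨n, hn⟩ := htors x hx
  induction n with
  | zero => simpa using hn
  | succ n ih =>
    refine ih (hf _ ?_ ?_)
    · rw [← mul_smul, ← pow_succ', hn]
    · rw [map_nsmul, hx, smul_zero]

theorem zsmul_eq_zero_or_mem_of_zsmul_mem {A : Type*} [AddCommGroup A] (K : AddSubgroup A)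
    {p : ℕ} (hp : p.Prime) {t : A} (ht : p • t = 0) {k : ℤ} (hk : k • t ∈ K) :
    k • t = 0 ∨ t ∈ K := by
  by_cases hpk : (p : ℤ) ∣ k
  · obtain ⟨m, rfl⟩ := hpk
    left
    rw [mul_comm, mul_smul, natCast_zsmul, ht, smul_zero]
  · obtain ⟨u, v, huv⟩ := (Nat.prime_iff_prime_int.1 hp).coprime_iff_not_dvd.2 hpk
    right
    have ht' : v • k • t = t := by
      rw [← mul_smul, eq_sub_of_add_eq' huv, sub_smul, mul_smul, natCast_zsmul, ht, smul_zero,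
        sub_zero, one_smul]
    exact ht' ▸ K.zsmul_mem hk v

theorem mem_of_sum_mem_of_pairwise_isCoprime {A ι : Type*} [AddCommGroup A] (K : AddSubgroup A)
    (s : Finset ι) (x : ι → A) (n : ι → ℤ) (hx : ∀ i ∈ s, n i • x i = 0)
    (hn : (s : Set ι).Pairwise (Function.onFun IsCoprime n)) (hsum : ∑ i ∈ s, x i ∈ K)
    {i : ι} (hi : i ∈ s) : x i ∈ K := by
  classical
  obtain ⟨u, v, huv⟩ : IsCoprime (n i) (∏ j ∈ s.erase i, n j) :=
    IsCoprime.prod_right fun j hj =>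
      hn hi (Finset.mem_of_mem_erase hj) (Finset.ne_of_mem_erase hj).symm
  have hothers : ∀ j ∈ s.erase i, (∏ j ∈ s.erase i, n j) • x j = 0 := by
    intro j hj
    obtain ⟨r, hr⟩ := Finset.dvd_prod_of_mem n hj
    rw [hr, mul_comm, mul_smul, hx j (Finset.mem_of_mem_erase hj), smul_zero]
  have hxi : x i = v • (∏ j ∈ s.erase i, n j) • ∑ j ∈ s, x j := by
    rw [← Finset.add_sum_erase s x hi, smul_add, Finset.smul_sum, Finset.sum_eq_zero hothers,
      add_zero, ← mul_smul, eq_sub_of_add_eq' huv, sub_smul, mul_smul, hx i hi]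
    simp
  exact hxi ▸ K.zsmul_mem (K.zsmul_mem hsum _) _

theorem map_eq_zero_of_mem_torsion {R M N : Type*} [CommRing R] [IsDomain R] [AddCommGroup M]
    [AddCommGroup N] [Module R M] [Module R N] [Module.IsTorsionFree R N] (f : M →ₗ[R] N) {x : M}
    (hx : x ∈ Submodule.torsion R M) : f x = 0 := by
  obtain ⟨r, hr⟩ := (Submodule.mem_torsion_iff x).1 hx
  refine (smul_eq_zero_iff_right (nonZeroDivisors.coe_ne_zero r)).1 ?_
  rw [← map_smul]
  exact (congrArg f hr).trans f.map_zero

open TensorProduct in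
theorem finite_setOf_eq_smul {R M N : Type*} [CommRing R] [IsDomain R] [AddCommGroup M]
    [AddCommGroup N] [Module R M] [Module R N] [Module.Finite R M] (i f : M →ₗ[R] N)
    (hi : Function.Injective i) :
    {r : R | ∃ x ∉ Submodule.torsion R M, i x = r • f x}.Finite := by
  let K := FractionRing R
  let iK := i.baseChange K
  let fK := f.baseChange K
  have hiK : Function.Injective iK := Module.Flat.lTensor_preserves_injective_linearMap i hi
  obtain ⟨ρ, hρ⟩ := iK.exists_leftInverse_of_injective (LinearMap.ker_eq_bot.2 hiK)
  -- `i x = r • f x` makes `x` an eigenvector of `ρ ∘ fK` with eigenvalue `r⁻¹`.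
  have hinj : Function.Injective fun r : R => (algebraMap R K r)⁻¹ :=
    inv_injective.comp (FaithfulSMul.algebraMap_injective R K)
  refine ((Module.End.finite_hasEigenvalue (ρ ∘ₗ fK)).preimage hinj.injOn).subset ?_
  rintro r ⟨x, hx, hix⟩
  have hx_ne : (1 : K) ⊗ₜ[R] x ≠ 0 := fun h0 =>
    hx <| (Submodule.mem_torsion_iff x).2 <|
      (IsLocalizedModule.eq_zero_iff (nonZeroDivisors R) (TensorProduct.mk R K M 1)).1 h0
  have heig : (1 : K) ⊗ₜ[R] x = algebraMap R K r • ρ (fK (1 ⊗ₜ x)) := by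
    have : iK (1 ⊗ₜ x) = algebraMap R K r • fK (1 ⊗ₜ x) := by
      simp only [iK, fK, LinearMap.baseChange_tmul, hix, tmul_smul, algebraMap_smul]
    rw [← map_smul, ← this]
    exact (LinearMap.congr_fun hρ _).symm
  have hr : algebraMap R K r ≠ 0 := fun h0 => hx_ne (by rw [heig, h0, zero_smul])
  refine Module.End.hasEigenvalue_of_hasEigenvector (x := 1 ⊗ₜ x) ⟨?_, hx_ne⟩
  rw [Module.End.mem_eigenspace_iff, LinearMap.comp_apply, eq_inv_smul_iff₀ hr]
  exact heig.symm

section ZMod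

theorem exists_zmodHom_apply_one_eq {A : Type*} [AddCommGroup A] {n : ℕ} {y : A}
    (hy : n • y = 0) : ∃ φ : ZMod n →+ A, φ 1 = y := by
  refine ⟨ZMod.lift n ⟨zmultiplesHom A y, by simpa using hy⟩, ?_⟩
  simpa using ZMod.lift_coe n ⟨zmultiplesHom A y, by simpa using hy⟩ 1

theorem zmodHom_apply_natCast {A : Type*} [AddCommGroup A] {n : ℕ} (φ : ZMod n →+ A) (k : ℕ) :
    φ k = k • φ 1 := by
  rw [← nsmul_one, map_nsmul]

theorem zmodHom_injective_of_addOrderOf {A : Type*} [AddCommGroup A] {n : ℕ} (φ : ZMod n →+ A)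
    (hφ : addOrderOf (φ 1) = n) : Function.Injective φ := by
  rw [injective_iff_map_eq_zero]
  intro z hz
  obtain ⟨k, rfl⟩ := ZMod.intCast_surjective z
  rw [← zsmul_one, map_zsmul, ← addOrderOf_dvd_iff_zsmul_eq_zero, hφ] at hz
  exact (ZMod.intCast_zmod_eq_zero_iff_dvd k n).2 hz

theorem mem_zmultiples_of_prime_nsmul_eq_zero {p e : ℕ} (hp : p.Prime) (he : e ≠ 0)
    {z : ZMod (p ^ e)} (hz : p • z = 0) :
    z ∈ zmultiples ((p ^ (e - 1) : ℕ) : ZMod (p ^ e)) := by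
  obtain ⟨k, rfl⟩ := ZMod.intCast_surjective z
  have hdvd : (p : ℤ) * (p ^ (e - 1) : ℕ) ∣ p * k := by
    rw [← Nat.cast_mul, mul_pow_sub_one he, ← ZMod.intCast_zmod_eq_zero_iff_dvd]
    simpa using hz
  obtain ⟨r, rfl⟩ := Int.dvd_of_mul_dvd_mul_left (mod_cast hp.ne_zero) hdvd
  exact mem_zmultiples_iff.2 ⟨r, by simp [mul_comm]⟩

theorem isUnit_of_prime_pow_nsmul_ne_zero {p n : ℕ} (hp : p.Prime) {z : ZMod (p ^ (n + 1))}
    (hz : p ^ n • z ≠ 0) : IsUnit z := by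
  have : NeZero (p ^ (n + 1)) := ⟨pow_ne_zero _ hp.ne_zero⟩
  obtain ⟨k, rfl⟩ := ZMod.natCast_zmod_surjective z
  rw [ZMod.isUnit_iff_coprime]
  refine Nat.Coprime.pow_right _ ((hp.coprime_iff_not_dvd.2 fun hpk => hz ?_).symm)
  rw [nsmul_eq_mul, ← Nat.cast_mul, ZMod.natCast_eq_zero_iff, pow_succ]
  exact Nat.mul_dvd_mul_left _ hpk

theorem exists_zmodChar_apply_ne_zero {A : Type*} [AddCommGroup A] {n : ℕ} (hn : 0 < n) {x : A}
    (hx : ∀ y, n • y ≠ x) : ∃ χ : A →+ ZMod n, χ x ≠ 0 := by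
  let R : AddSubgroup A := (nsmulAddMonoidHom (α := A) n).range
  have hxR : (x : A ⧸ R) ≠ 0 := fun h0 => by
    obtain ⟨y, hy⟩ := (QuotientAddGroup.eq_zero_iff x).1 h0
    exact hx y hy
  obtain ⟨c, hc⟩ := CharacterModule.exists_character_apply_ne_zero_of_ne_zero hxR
  let ω : AddCircle (1 : ℚ) := ((1 / n : ℚ) : AddCircle (1 : ℚ))
  have hω : addOrderOf ω = n := AddCircle.addOrderOf_period_div hn
  obtain ⟨ζ, hζ⟩ := exists_zmodHom_apply_one_eq (hω ▸ addOrderOf_nsmul_eq_zero ω : n • ω = 0)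
  have hζ_inj : Function.Injective ζ := zmodHom_injective_of_addOrderOf ζ (hζ ▸ hω)
  have hrange : ∀ y : A, c y ∈ ζ.range := by
    intro y
    have hy : n • c y = 0 := by
      have hny : (↑(n • y) : A ⧸ R) = 0 := (QuotientAddGroup.eq_zero_iff _).2 ⟨y, rfl⟩
      rw [← map_nsmul, ← QuotientAddGroup.mk_nsmul, hny, map_zero]
    obtain ⟨m, -, hm⟩ := (AddCircle.nsmul_eq_zero_iff hn).1 hy
    refine ⟨m, ?_⟩
    rw [zmodHom_apply_natCast, hζ, ← hm, ← AddCircle.coe_nsmul]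
    simp [div_eq_mul_inv]
  let E : ZMod n ≃+ ζ.range := AddMonoidHom.ofInjective hζ_inj
  let cA : A →+ AddCircle (1 : ℚ) := AddMonoidHom.comp c (QuotientAddGroup.mk' R)
  refine ⟨E.symm.toAddMonoidHom.comp (cA.codRestrict ζ.range hrange), fun h0 => hc ?_⟩
  have hcx : cA.codRestrict ζ.range hrange x = 0 := E.symm.map_eq_zero_iff.1 h0
  exact congrArg Subtype.val hcx

end ZMod

theorem exists_end_fixing_socle_of_finite_height {A : Type*} [AddCommGroup A] {p : ℕ}
    (hp : p.Prime) {s : A} (hs : p • s = 0) (hheight : ∃ n : ℕ, ∀ y, p ^ n • y ≠ s) :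
    ∃ θ : A →+ A, θ s = s ∧ (∀ x, p • x = 0 → θ x ∈ zmultiples s) ∧
      ∀ x, ∃ n : ℕ, p ^ n • θ x = 0 := by
  classical
  obtain ⟨h, hh⟩ : ∃ h, Nat.find hheight = h + 1 := Nat.exists_eq_succ_of_ne_zero fun h0 => by
    simpa [h0] using Nat.find_spec hheight s
  obtain ⟨c, hc⟩ : ∃ c, p ^ h • c = s := by
    simpa using Nat.find_min hheight (m := h) (by lia)
  have hmax : ∀ y, p ^ (h + 1) • y ≠ s := by
    rw [← hh]
    exact Nat.find_spec hheight
  obtain ⟨φ, hφ⟩ : ∃ φ : ZMod (p ^ (h + 1)) →+ A, φ 1 = c :=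
    exists_zmodHom_apply_one_eq (by rw [pow_succ', mul_smul, hc, hs])
  obtain ⟨χ, hχ⟩ := exists_zmodChar_apply_ne_zero (pow_pos hp.pos _) hmax
  have hunit : IsUnit (χ c) :=
    isUnit_of_prime_pow_nsmul_ne_zero hp (by rwa [← map_nsmul, hc])
  obtain ⟨u, hu⟩ := hunit.exists_left_inv
  -- `θ` is the projection onto a cyclic direct summand `⟨c⟩` whose `p`-torsion is `⟨s⟩`.
  let θ : A →+ A := φ.comp ((AddMonoidHom.mulLeft u).comp χ)
  have hθc : θ c = c := by
    change φ (u * χ c) = c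
    rw [hu, hφ]
  refine ⟨θ, by rw [← hc, map_nsmul, hθc], fun x hx => ?_, fun x => ⟨h + 1, ?_⟩⟩
  · have hux : p • (u * χ x) = 0 := by rw [← mul_smul_comm, ← map_nsmul, hx, map_zero, mul_zero]
    obtain ⟨k, hk⟩ :=
      mem_zmultiples_iff.1 (mem_zmultiples_of_prime_nsmul_eq_zero hp h.succ_ne_zero hux)
    refine mem_zmultiples_iff.2 ⟨k, ?_⟩
    change k • s = φ (u * χ x)
    rw [← hk, map_zsmul, zmodHom_apply_natCast, hφ, Nat.succ_sub_one, hc]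
  · change p ^ (h + 1) • φ (u * χ x) = 0
    rw [← map_nsmul, nsmul_eq_mul, ZMod.natCast_self, zero_mul, map_zero]

/-- A cyclic direct summand of `A` of prime power order `p ^ e`, with `e ≠ 0`, encoded by its
inclusion and the coordinate map retracting `A` onto it. -/
structure PrimaryCyclicSummand (A : Type*) [AddCommGroup A] where
  p : ℕ
  e : ℕ
  prime_p : p.Prime
  e_ne_zero : e ≠ 0
  coord : A →+ ZMod (p ^ e)
  incl : ZMod (p ^ e) →+ A
  coord_incl : ∀ z, coord (incl z) = z

namespace PrimaryCyclicSummand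

variable {A : Type*} [AddCommGroup A] (D : PrimaryCyclicSummand A)

/-- The projection of the ambient group onto the summand, as an endomorphism. -/
def proj : A →+ A := D.incl.comp D.coord

theorem proj_incl (z : ZMod (D.p ^ D.e)) : D.proj (D.incl z) = D.incl z :=
  congrArg D.incl (D.coord_incl z)

/-- The generator `p ^ (e - 1)` of the `p`-torsion of `ℤ/p^e`. -/
def socle : ZMod (D.p ^ D.e) := (D.p ^ (D.e - 1) : ℕ)

theorem prime_nsmul_socle : D.p • D.socle = 0 := by
  rw [socle, nsmul_eq_mul, ← Nat.cast_mul, mul_pow_sub_one D.e_ne_zero, ZMod.natCast_self]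

theorem pow_nsmul_eq_zero (z : ZMod (D.p ^ D.e)) : D.p ^ D.e • z = 0 := by
  rw [nsmul_eq_mul, ZMod.natCast_self, zero_mul]

theorem exists_coord_eq_zsmul_socle {x : A} (hx : D.p • x = 0) :
    ∃ k : ℤ, k • D.socle = D.coord x :=
  mem_zmultiples_iff.1 <| mem_zmultiples_of_prime_nsmul_eq_zero D.prime_p D.e_ne_zero <| by
    rw [← map_nsmul, hx, map_zero]

theorem exists_hom_socle_eq {B : Type*} [AddCommGroup B] {t y : B} (ht : D.p • t = 0)
    (hy : D.p ^ (D.e - 1) • y = t) : ∃ φ : ZMod (D.p ^ D.e) →+ B, φ D.socle = t := by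
  obtain ⟨φ, hφ⟩ : ∃ φ : ZMod (D.p ^ D.e) →+ B, φ 1 = y :=
    exists_zmodHom_apply_one_eq (by rw [← mul_pow_sub_one D.e_ne_zero, mul_smul, hy, ht])
  exact ⟨φ, by rw [socle, zmodHom_apply_natCast, hφ, hy]⟩

end PrimaryCyclicSummand

theorem exists_primaryCyclicSummands (A : Type*) [AddCommGroup A] [AddGroup.FG A] :
    ∃ (ι : Type) (_ : Fintype ι) (D : ι → PrimaryCyclicSummand A),
      (Pairwise fun i j => ∀ z, (D i).coord ((D j).incl z) = 0) ∧
      ∀ x ∈ Submodule.torsion ℤ A, ∑ i, (D i).proj x = x := by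
  classical
  obtain ⟨n, ι, _, p, hp, e, ⟨Φ⟩⟩ := AddCommGroup.equiv_free_prod_directSum_zmod A
  let coord (i : ι) : A →+ ZMod (p i ^ e i) :=
    (DFinsupp.evalAddMonoidHom i).comp ((AddMonoidHom.snd _ _).comp Φ.toAddMonoidHom)
  let incl (i : ι) : ZMod (p i ^ e i) →+ A :=
    Φ.symm.toAddMonoidHom.comp ((AddMonoidHom.inr _ _).comp
      (DirectSum.of (fun i => ZMod (p i ^ e i)) i))
  have hcoord (i j : ι) (z : ZMod (p j ^ e j)) :
      coord i (incl j z) = DirectSum.of (fun i => ZMod (p i ^ e i)) j z i := by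
    simp only [coord, incl, AddMonoidHom.comp_apply, AddEquiv.coe_toAddMonoidHom,
      AddEquiv.apply_symm_apply]
    rfl
  have hsum : ∀ x ∈ Submodule.torsion ℤ A, ∑ i, incl i (coord i x) = x := by
    intro x hx
    have hfst : (Φ x).1 = 0 := map_eq_zero_of_mem_torsion
      ((AddMonoidHom.fst _ _).comp Φ.toAddMonoidHom).toIntLinearMap hx
    have hsnd : ∑ i, DirectSum.of _ i ((Φ x).2 i) = (Φ x).2 := DirectSum.sum_univ_of _
    have hΦx : (AddMonoidHom.inr (Fin n →₀ ℤ) _) (Φ x).2 = Φ x := Prod.ext hfst.symm rfl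
    change ∑ i, Φ.symm (AddMonoidHom.inr _ _ (DirectSum.of _ i ((Φ x).2 i))) = x
    rw [← map_sum, ← map_sum, hsnd, hΦx, Φ.symm_apply_apply]
  refine ⟨{i // e i ≠ 0}, inferInstance, fun i =>
    ⟨p i, e i, hp i, i.2, coord i, incl i, fun z => ?_⟩, fun i j hij z => ?_, fun x hx => ?_⟩
  · rw [hcoord, DirectSum.of_eq_same]
  · exact (hcoord _ _ z).trans (DirectSum.of_eq_of_ne _ _ _ (Subtype.coe_ne_coe.2 hij))
  · have hsupp : ∀ i, incl i (coord i x) ≠ 0 → e i ≠ 0 := by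
      rintro i hne he
      have : Subsingleton (ZMod (p i ^ e i)) := by
        rw [he, pow_zero]
        infer_instance
      exact hne (by rw [Subsingleton.elim (coord i x) 0, map_zero])
    calc ∑ i : {i // e i ≠ 0}, incl i (coord i x)
        = ∑ i with e i ≠ 0, incl i (coord i x) := by
          rw [← Finset.sum_subtype_eq_sum_filter, Finset.subtype_univ]
      _ = ∑ i, incl i (coord i x) := Finset.sum_filter_of_ne fun i _ => hsupp i
      _ = x := hsum x hx

section Extendable

variable {G : Type*} [AddCommGroup G] {H : AddSubgroup G}

/-- The homomorphisms `H → G` that are restrictions of endomorphisms of `G`. Thus `InP H` says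
that this group contains all monomorphisms, and `InQ H` that it contains everything. -/
def extendableHoms (H : AddSubgroup G) : AddSubgroup (H →+ G) :=
  (AddMonoidHom.compHom.flip H.subtype).range

theorem mem_extendableHoms_iff {f : H →+ G} :
    f ∈ extendableHoms H ↔ ∃ g : G →+ G, ∀ x : H, g x = f x :=
  exists_congr fun _ => DFunLike.ext_iff

theorem subtype_mem_extendableHoms : H.subtype ∈ extendableHoms H :=
  ⟨AddMonoidHom.id G, rfl⟩

theorem comp_mem_extendableHoms (g : G →+ G) {f : H →+ G} (hf : f ∈ extendableHoms H) :
    g.comp f ∈ extendableHoms H := by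
  obtain ⟨g', rfl⟩ := hf
  exact ⟨g.comp g', rfl⟩

theorem mem_extendableHoms_of_injective (hP : InP H) {f : H →+ G} (hf : Function.Injective f) :
    f ∈ extendableHoms H :=
  mem_extendableHoms_iff.2 (hP f hf)

theorem mem_extendableHoms_of_torsion_eq_zero [AddGroup.FG H] (hP : InP H) {f : H →+ G}
    (hf : ∀ x ∈ Submodule.torsion ℤ H, f x = 0) : f ∈ extendableHoms H := by
  have : Module.Finite ℤ H := Module.Finite.iff_addGroup_fg.2 ‹_›
  let bad : Set ℤ := {k | ∃ x ∉ Submodule.torsion ℤ H, (x : G) = k • f x}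
  have hbad : bad.Finite := finite_setOf_eq_smul H.subtype.toIntLinearMap f.toIntLinearMap
    Subtype.val_injective
  have hmem : ∀ k ∉ bad, H.subtype - k • f ∈ extendableHoms H := by
    intro k hk
    refine mem_extendableHoms_of_injective hP ((injective_iff_map_eq_zero _).2 fun x hx => ?_)
    have hx' : (x : G) = k • f x := by simpa [sub_eq_zero] using hx
    have hxt : x ∈ Submodule.torsion ℤ H := by_contra fun h => hk ⟨x, h, hx'⟩
    rw [hf x hxt, smul_zero] at hx'
    exact Subtype.ext hx'
  obtain ⟨k, hk⟩ :=
    (hbad.union (hbad.preimage (add_left_injective (1 : ℤ)).injOn)).exists_notMem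
  rw [Set.mem_union, not_or] at hk
  have hdiff := sub_mem (hmem k hk.1) (hmem (k + 1) hk.2)
  rwa [sub_sub_sub_cancel_left, add_smul, one_smul, add_sub_cancel_left] at hdiff

theorem comp_mem_extendableHoms_of_socle (hP : InP H) {A : Type*} [AddCommGroup A] (p : ℕ)
    (c : H →+ A) (φ : A →+ G) (htors : ∀ a, ∃ n : ℕ, p ^ n • φ a = 0)
    (h : ∀ x y : H, p • x = 0 → φ (c x) = y → c y = 0) : φ.comp c ∈ extendableHoms H := by
  have hinj : Function.Injective (H.subtype - φ.comp c) := by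
    have heq : ∀ x, (H.subtype - φ.comp c) x = 0 → φ (c x) = x := fun x hx =>
      (sub_eq_zero.1 hx).symm
    refine injective_of_forall_nsmul_eq_zero p _ (fun x hx => ?_) (fun x hpx hx => ?_)
    · obtain ⟨n, hn⟩ := htors (c x)
      exact ⟨n, Subtype.ext (by rwa [heq x hx] at hn)⟩
    · have hxφ := heq x hx
      rw [h x x hpx hxφ, map_zero] at hxφ
      exact Subtype.ext hxφ.symm
  simpa using sub_mem subtype_mem_extendableHoms (mem_extendableHoms_of_injective hP hinj)

namespace PrimaryCyclicSummand

variable (D : PrimaryCyclicSummand H)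

theorem prime_nsmul_coe_incl_socle : D.p • (D.incl D.socle : G) = 0 := by
  rw [← coe_nsmul, ← map_nsmul, D.prime_nsmul_socle, map_zero, coe_zero]

theorem comp_coord_mem (hP : InP H) (φ : ZMod (D.p ^ D.e) →+ G)
    (h : ∀ y : H, φ D.socle = y → D.coord y = 0) : φ.comp D.coord ∈ extendableHoms H := by
  refine comp_mem_extendableHoms_of_socle hP D.p D.coord φ
    (fun z => ⟨D.e, by rw [← map_nsmul, D.pow_nsmul_eq_zero, map_zero]⟩) fun x y hx hxy => ?_
  obtain ⟨k, hk⟩ := D.exists_coord_eq_zsmul_socle hx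
  have hy : k • φ D.socle = y := by rw [← map_zsmul, hk, hxy]
  have hsocle : D.p • φ D.socle = 0 := by rw [← map_nsmul, D.prime_nsmul_socle, map_zero]
  rcases zsmul_eq_zero_or_mem_of_zsmul_mem H D.prime_p hsocle (hy ▸ y.2) with h0 | hmem
  · have : y = 0 := Subtype.ext (hy.symm.trans h0)
    rw [this, map_zero]
  · have : y = k • ⟨φ D.socle, hmem⟩ := Subtype.ext hy.symm
    rw [this, map_zsmul, h _ rfl, smul_zero]

theorem subtype_comp_proj_mem_of_socle (hP : InP H) (φ : ZMod (D.p ^ D.e) →+ G)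
    (hφ : φ D.socle = D.incl D.socle) (hmem : φ.comp D.coord ∈ extendableHoms H) :
    H.subtype.comp D.proj ∈ extendableHoms H := by
  have hdiff : (H.subtype.comp D.incl - φ).comp D.coord ∈ extendableHoms H := by
    refine D.comp_coord_mem hP _ fun y hy => ?_
    have : y = 0 := Subtype.ext (by simpa [hφ] using hy.symm)
    rw [this, map_zero]
  rw [AddMonoidHom.sub_comp] at hdiff
  simpa [proj, AddMonoidHom.comp_assoc] using add_mem hdiff hmem

theorem comp_coord_mem_of_proj (hP : InP H) (hD : H.subtype.comp D.proj ∈ extendableHoms H)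
    (φ : ZMod (D.p ^ D.e) →+ G) : φ.comp D.coord ∈ extendableHoms H := by
  by_cases hmem : φ D.socle ∈ H
  · have hpy : D.p • (⟨φ D.socle, hmem⟩ : H) = 0 := Subtype.ext <| by
      rw [coe_nsmul, ← map_nsmul, D.prime_nsmul_socle, map_zero, coe_zero]
    obtain ⟨m, hm⟩ := D.exists_coord_eq_zsmul_socle hpy
    have hdiff : φ.comp D.coord - m • H.subtype.comp D.proj ∈ extendableHoms H := by
      refine D.comp_coord_mem hP (φ - m • H.subtype.comp D.incl) fun y hy => ?_
      have : y = ⟨φ D.socle, hmem⟩ - m • D.incl D.socle := Subtype.ext (by simpa using hy.symm)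
      rw [this, map_sub, map_zsmul, D.coord_incl, hm, sub_self]
    simpa using add_mem hdiff (zsmul_mem hD m)
  · exact D.comp_coord_mem hP φ fun y hy => absurd (hy ▸ y.2) hmem

theorem subtype_comp_proj_mem_of_finite_height (hP : InP H)
    (hheight : ∃ n : ℕ, ∀ y : G, D.p ^ n • y ≠ D.incl D.socle) :
    H.subtype.comp D.proj ∈ extendableHoms H := by
  obtain ⟨θ, hθs, hθ, htors⟩ :=
    exists_end_fixing_socle_of_finite_height D.prime_p D.prime_nsmul_coe_incl_socle hheight
  let θH : H →+ G := θ.comp H.subtype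
  have hcompl : θH.comp (AddMonoidHom.id H - D.proj) ∈ extendableHoms H := by
    refine comp_mem_extendableHoms_of_socle hP D.p _ θH (fun x => htors x) fun x y hx hxy => ?_
    have hpx : D.p • ((AddMonoidHom.id H - D.proj) x : G) = 0 := by
      rw [← coe_nsmul, ← map_nsmul, hx, map_zero, coe_zero]
    obtain ⟨k, hk⟩ := mem_zmultiples_iff.1 (hθ _ hpx)
    have : y = k • D.incl D.socle := Subtype.ext (hxy.symm.trans hk.symm)
    rw [this, map_zsmul, AddMonoidHom.sub_apply, AddMonoidHom.id_apply, D.proj_incl, sub_self,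
      smul_zero]
  have hθH : θH ∈ extendableHoms H := comp_mem_extendableHoms θ subtype_mem_extendableHoms
  refine D.subtype_comp_proj_mem_of_socle hP (θH.comp D.incl) hθs ?_
  have hsub := sub_mem hθH hcompl
  rwa [AddMonoidHom.comp_sub, AddMonoidHom.comp_id, sub_sub_cancel] at hsub

theorem subtype_comp_proj_mem_of_swap (hP : InP H) (D' : PrimaryCyclicSummand H)
    (hp : D.p = D'.p) (horth : ∀ z, D.coord (D'.incl z) = 0)
    (horth' : ∀ z, D'.coord (D.incl z) = 0)
    (hheight : ∀ n : ℕ, ∃ y : G, D.p ^ n • y = D.incl D.socle)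
    (hheight' : ∀ n : ℕ, ∃ y : G, D'.p ^ n • y = D'.incl D'.socle) :
    H.subtype.comp D.proj ∈ extendableHoms H := by
  obtain ⟨y, hy⟩ := hheight' (D.e - 1)
  obtain ⟨φ, hφ⟩ : ∃ φ : ZMod (D.p ^ D.e) →+ G, φ D.socle = D'.incl D'.socle :=
    D.exists_hom_socle_eq (by rw [hp, D'.prime_nsmul_coe_incl_socle]) (by rw [hp, hy])
  obtain ⟨y', hy'⟩ := hheight (D'.e - 1)
  obtain ⟨φ', hφ'⟩ : ∃ φ' : ZMod (D'.p ^ D'.e) →+ G, φ' D'.socle = D.incl D.socle :=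
    D'.exists_hom_socle_eq (by rw [← hp, D.prime_nsmul_coe_incl_socle]) (by rw [← hp, hy'])
  have hmem : φ.comp D.coord ∈ extendableHoms H := D.comp_coord_mem hP φ fun x hx => by
    rw [← Subtype.ext (hφ.symm.trans hx), horth]
  have hmem' : φ'.comp D'.coord ∈ extendableHoms H := D'.comp_coord_mem hP φ' fun x hx => by
    rw [← Subtype.ext (hφ'.symm.trans hx), horth']
  obtain ⟨g, hg⟩ := mem_extendableHoms_iff.1 hmem'
  refine D.subtype_comp_proj_mem_of_socle hP (g.comp φ) ?_ (comp_mem_extendableHoms g hmem)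
  calc g (φ D.socle) = g (D'.incl D'.socle) := by rw [hφ]
    _ = φ' (D'.coord (D'.incl D'.socle)) := hg _
    _ = D.incl D.socle := by rw [D'.coord_incl, hφ']

end PrimaryCyclicSummand

variable {ι : Type*} [Fintype ι] (D : ι → PrimaryCyclicSummand H)

theorem sub_sum_comp_proj_mem [AddGroup.FG H] (hP : InP H)
    (htors : ∀ x ∈ Submodule.torsion ℤ H, ∑ i, (D i).proj x = x) (f : H →+ G) :
    f - ∑ i, f.comp (D i).proj ∈ extendableHoms H := by
  refine mem_extendableHoms_of_torsion_eq_zero hP fun x hx => ?_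
  simp [AddMonoidHom.finsetSum_apply, ← map_sum, htors x hx]

theorem subtype_comp_proj_mem [AddGroup.FG H] (hP : InP H)
    (horth : Pairwise fun i j => ∀ z, (D i).coord ((D j).incl z) = 0)
    (htors : ∀ x ∈ Submodule.torsion ℤ H, ∑ i, (D i).proj x = x) (i : ι) :
    H.subtype.comp (D i).proj ∈ extendableHoms H := by
  classical
  let bad : Finset ι := {i | H.subtype.comp (D i).proj ∉ extendableHoms H}
  have hheight : ∀ i ∈ bad, ∀ n : ℕ, ∃ y : G, (D i).p ^ n • y = (D i).incl (D i).socle := by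
    intro i hi
    by_contra! h
    exact (Finset.mem_filter.1 hi).2 ((D i).subtype_comp_proj_mem_of_finite_height hP h)
  have hprime : ∀ i ∈ bad, ∀ j ∈ bad, i ≠ j → (D i).p ≠ (D j).p := fun i hi j hj hij hp =>
    (Finset.mem_filter.1 hi).2 <| (D i).subtype_comp_proj_mem_of_swap hP (D j) hp (horth hij)
      (horth hij.symm) (hheight i hi) (hheight j hj)
  have hcoprime : (bad : Set ι).Pairwise
      (Function.onFun IsCoprime fun i => (((D i).p ^ (D i).e : ℕ) : ℤ)) :=
    fun i hi j hj hij => Nat.isCoprime_iff_coprime.2 <| Nat.Coprime.pow _ _ <|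
      (Nat.coprime_primes (D i).prime_p (D j).prime_p).2 (hprime i hi j hj hij)
  have hsum : ∑ i ∈ bad, H.subtype.comp (D i).proj ∈ extendableHoms H := by
    have hgood : ∑ i with ¬ H.subtype.comp (D i).proj ∉ extendableHoms H,
        H.subtype.comp (D i).proj ∈ extendableHoms H :=
      sum_mem fun i hi => not_not.1 (Finset.mem_filter.1 hi).2
    have hall := sub_mem subtype_mem_extendableHoms (sub_sum_comp_proj_mem D hP htors H.subtype)
    rw [sub_sub_cancel, ← Finset.sum_filter_add_sum_filter_not _
      (fun i => H.subtype.comp (D i).proj ∉ extendableHoms H)] at hall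
    exact ((extendableHoms H).add_mem_cancel_right hgood).1 hall
  by_contra hi
  have hi_bad : i ∈ bad := Finset.mem_filter.2 ⟨Finset.mem_univ i, hi⟩
  refine hi (mem_of_sum_mem_of_pairwise_isCoprime _ bad _ _ (fun i _ => ?_) hcoprime hsum hi_bad)
  ext x
  change (((D i).p ^ (D i).e : ℕ) : ℤ) • ((D i).incl ((D i).coord x) : G) = 0
  rw [natCast_zsmul, ← coe_nsmul, ← map_nsmul, (D i).pow_nsmul_eq_zero, map_zero, coe_zero]

end Extendable

theorem stmt19 {G : Type*} [AddCommGroup G] (H : AddSubgroup G) (hfg : H.FG)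
    (hP : InP H) : InQ H := by
  intro f
  have hFG : AddGroup.FG H := (AddGroup.fg_iff_addSubgroup_fg H).2 hfg
  obtain ⟨ι, _, D, horth, htors⟩ := exists_primaryCyclicSummands H
  have hrest : f - ∑ i, f.comp (D i).proj ∈ extendableHoms H :=
    sub_sum_comp_proj_mem D hP htors f
  have hsum : ∑ i, f.comp (D i).proj ∈ extendableHoms H := sum_mem fun i _ =>
    (D i).comp_coord_mem_of_proj hP (subtype_comp_proj_mem D hP horth htors i)
      (f.comp (D i).incl)
  exact mem_extendableHoms_iff.1 (by simpa using add_mem hrest hsum)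
end
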